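/- Let f : ℝ^d → ℝ be L-smooth, let μ > 0, and let f_μ be its Gaussian smoothing. Then for every x ∈ ℝ^d, |f_μ(x) − f(x)| ≤ L d μ² / 2. -/

import Mathlib

/-!
The first-order Taylor expansion of `f` at the mean of a random vector `X` is `f 𝔼[X]` plus a term
linear in `X - 𝔼[X]`, which averages to zero. When the derivative of `f` is `L`-Lipschitz the
remainder is at most `L / 2 * ‖X - 𝔼[X]‖ ^ 2`, so `‖𝔼[f X] - f 𝔼[X]‖` is at most `L / 2` times the
variance of `X`. For `X = x + μ u` with `u` standard Gaussian the variance is `μ ^ 2 * d`.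
-/

open MeasureTheory ProbabilityTheory

/-- The standard multivariate Gaussian distribution `N(0, I_d)` on `ℝ^d`. -/
noncomputable def stdGaussian (d : ℕ) : Measure (EuclideanSpace ℝ (Fin d)) :=
  (Measure.pi fun _ : Fin d => gaussianReal 0 1).map
    (MeasurableEquiv.toLp 2 (Fin d → ℝ))

lemma norm_gradient_sub_gradient {𝕜 H : Type*} [RCLike 𝕜] [NormedAddCommGroup H]
    [InnerProductSpace 𝕜 H] [CompleteSpace H] (f g : H → 𝕜) (x y : H) :
    ‖gradient f x - gradient g y‖ = ‖fderiv 𝕜 f x - fderiv 𝕜 g y‖ := by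
  rw [← toDual_gradient, ← toDual_gradient, ← map_sub, LinearIsometryEquiv.norm_map]

lemma norm_sub_sub_fderiv_le_of_norm_fderiv_sub_le {E F : Type*} [NormedAddCommGroup E]
    [NormedSpace ℝ E] [NormedAddCommGroup F] [NormedSpace ℝ F] {f : E → F} {L : ℝ} {x : E}
    (hf : Differentiable ℝ f) (hL : ∀ y, ‖fderiv ℝ f y - fderiv ℝ f x‖ ≤ L * ‖y - x‖) (y : E) :
    ‖f y - f x - fderiv ℝ f x (y - x)‖ ≤ L / 2 * ‖y - x‖ ^ 2 := by
  set v := y - x with hv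
  have hrem (t : ℝ) : HasDerivAt (fun t : ℝ => f (x + t • v) - f x - t • fderiv ℝ f x v)
      ((fderiv ℝ f (x + t • v) - fderiv ℝ f x) v) t := by
    have hline : HasDerivAt (fun t : ℝ => x + t • v) v t := by
      simpa using ((hasDerivAt_id t).smul_const v).const_add x
    have hcomp := (hf (x + t • v)).hasFDerivAt.comp_hasDerivAt t hline
    have hlin := (hasDerivAt_id t).smul_const (fderiv ℝ f x v)
    simpa using (hcomp.sub_const (f x)).fun_sub hlin
  have hquad (t : ℝ) :
      HasDerivAt (fun t : ℝ => L / 2 * ‖v‖ ^ 2 * t ^ 2) (L * ‖v‖ ^ 2 * t) t :=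
    ((hasDerivAt_pow 2 t).const_mul (L / 2 * ‖v‖ ^ 2)).congr_deriv (by push_cast; ring)
  have hderiv_le (t : ℝ) (ht : t ∈ Set.Ico (0 : ℝ) 1) :
      ‖(fderiv ℝ f (x + t • v) - fderiv ℝ f x) v‖ ≤ L * ‖v‖ ^ 2 * t :=
    calc ‖(fderiv ℝ f (x + t • v) - fderiv ℝ f x) v‖
        ≤ L * ‖x + t • v - x‖ * ‖v‖ := ContinuousLinearMap.le_of_opNorm_le _ (hL _) v
      _ = L * ‖v‖ ^ 2 * t := by
        rw [add_sub_cancel_left, norm_smul, Real.norm_of_nonneg ht.1]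
        ring
  have hrem_le := image_norm_le_of_norm_deriv_right_le_deriv_boundary
    (fun t _ => (hrem t).continuousAt.continuousWithinAt)
    (fun t _ => (hrem t).hasDerivWithinAt) (by simp) hquad hderiv_le
    (Set.right_mem_Icc.2 zero_le_one)
  simpa [hv] using hrem_le

section Jensen

variable {Ω E F : Type*} {mΩ : MeasurableSpace Ω} {P : Measure Ω} [IsProbabilityMeasure P]
  [NormedAddCommGroup E] [NormedSpace ℝ E] [CompleteSpace E]
  [NormedAddCommGroup F] [NormedSpace ℝ F] [CompleteSpace F]

lemma integral_clm_sub_integral_eq_zero {X : Ω → E} (hX : Integrable X P) (A : E →L[ℝ] F) :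
    ∫ ω, A (X ω - ∫ ω', X ω' ∂P) ∂P = 0 := by
  have hcentered : ∫ ω, (X ω - ∫ ω', X ω' ∂P) ∂P = 0 := by
    simpa only [average_eq_integral] using integral_sub_average P X
  exact (A.integral_comp_comm (hX.sub (integrable_const _))).trans
    ((congrArg A hcentered).trans (map_zero A))

lemma norm_integral_comp_sub_comp_integral_le {f : E → F} {X : Ω → E} {L : ℝ}
    (hf : Differentiable ℝ f) (hX : MemLp X 2 P)
    (hL : ∀ y, ‖fderiv ℝ f y - fderiv ℝ f (∫ ω, X ω ∂P)‖ ≤ L * ‖y - ∫ ω, X ω ∂P‖) :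
    ‖∫ ω, f (X ω) ∂P - f (∫ ω, X ω ∂P)‖ ≤ L / 2 * ∫ ω, ‖X ω - ∫ ω', X ω' ∂P‖ ^ 2 ∂P := by
  have hX_int : Integrable X P := hX.integrable one_le_two
  have hlin_zero := integral_clm_sub_integral_eq_zero hX_int (fderiv ℝ f (∫ ω, X ω ∂P))
  set m := ∫ ω, X ω ∂P
  have hlin : Integrable (fun ω => fderiv ℝ f m (X ω - m)) P :=
    (fderiv ℝ f m).integrable_comp (hX_int.sub (integrable_const m))
  have hsq : Integrable (fun ω => L / 2 * ‖X ω - m‖ ^ 2) P :=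
    ((hX.sub (memLp_const m)).integrable_norm_pow two_ne_zero).const_mul _
  have hrem_le (ω : Ω) : ‖f (X ω) - f m - fderiv ℝ f m (X ω - m)‖ ≤ L / 2 * ‖X ω - m‖ ^ 2 :=
    norm_sub_sub_fderiv_le_of_norm_fderiv_sub_le hf hL (X ω)
  have hrem : Integrable (fun ω => f (X ω) - f m - fderiv ℝ f m (X ω - m)) P :=
    hsq.mono' (((hf.continuous.comp_aestronglyMeasurable hX.1).sub
      aestronglyMeasurable_const).sub hlin.1) (.of_forall hrem_le)
  have hsub : Integrable (fun ω => f (X ω) - f m) P :=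
    (hrem.add hlin).congr (.of_forall fun ω => sub_add_cancel _ _)
  have hcomp : Integrable (fun ω => f (X ω)) P :=
    (hsub.add (integrable_const (f m))).congr (.of_forall fun ω => sub_add_cancel _ _)
  calc ‖∫ ω, f (X ω) ∂P - f m‖
      = ‖∫ ω, (f (X ω) - f m - fderiv ℝ f m (X ω - m)) ∂P‖ := by
        rw [integral_sub hsub hlin, integral_sub hcomp (integrable_const _), hlin_zero]
        simp
    _ ≤ ∫ ω, L / 2 * ‖X ω - m‖ ^ 2 ∂P := norm_integral_le_of_norm_le hsq (.of_forall hrem_le)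
    _ = L / 2 * ∫ ω, ‖X ω - m‖ ^ 2 ∂P := integral_const_mul _ _

end Jensen

section Gaussian

variable {E F : Type*} [NormedAddCommGroup E] [InnerProductSpace ℝ E] [FiniteDimensional ℝ E]
  [MeasurableSpace E] [BorelSpace E] [NormedAddCommGroup F] [NormedSpace ℝ F] [CompleteSpace F]

lemma integral_inner_sq_stdGaussian (v : E) :
    ∫ u, inner ℝ v u ^ 2 ∂(ProbabilityTheory.stdGaussian E) = ‖v‖ ^ 2 := by
  have hvar := variance_dual_stdGaussian (innerSL ℝ v)
  rwa [variance_of_integral_eq_zero (by fun_prop) (integral_strongDual_stdGaussian _),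
    innerSL_apply_norm] at hvar

variable (E) in
lemma integral_norm_sq_stdGaussian :
    ∫ u, ‖u‖ ^ 2 ∂(ProbabilityTheory.stdGaussian E) = Module.finrank ℝ E := by
  let b := stdOrthonormalBasis ℝ E
  have hint (i) : Integrable (fun u => inner ℝ (b i) u ^ 2) (ProbabilityTheory.stdGaussian E) :=
    (IsGaussian.memLp_dual _ (innerSL ℝ (b i)) 2 (by simp)).integrable_sq
  simp_rw [← b.sum_sq_inner_right]
  rw [integral_finsetSum _ fun i _ => hint i]
  simp [integral_inner_sq_stdGaussian]

lemma stdGaussian_eq_stdGaussian_euclideanSpace (d : ℕ) :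
    _root_.stdGaussian d = ProbabilityTheory.stdGaussian (EuclideanSpace ℝ (Fin d)) :=
  map_pi_eq_stdGaussian

theorem gaussian_smoothing_value_bound_general {f : E → F} {L : ℝ} {x : E} (μ : ℝ)
    (hf : Differentiable ℝ f) (hL : ∀ y, ‖fderiv ℝ f y - fderiv ℝ f x‖ ≤ L * ‖y - x‖) :
    ‖∫ u, f (x + μ • u) ∂(ProbabilityTheory.stdGaussian E) - f x‖
      ≤ L * Module.finrank ℝ E * μ ^ 2 / 2 := by
  set γ := ProbabilityTheory.stdGaussian E
  have hX : MemLp (fun u => x + μ • u) 2 γ :=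
    (memLp_const x).add (IsGaussian.memLp_two_id.const_smul μ)
  have hmean : ∫ u, x + μ • u ∂γ = x := by
    rw [integral_add (integrable_const x) (IsGaussian.integrable_fun_id.fun_smul μ), integral_smul,
      integral_id_stdGaussian]
    simp
  have hvar : ∫ u, ‖x + μ • u - x‖ ^ 2 ∂γ = μ ^ 2 * Module.finrank ℝ E := by
    simp_rw [add_sub_cancel_left, norm_smul, mul_pow, Real.norm_eq_abs, sq_abs]
    rw [integral_const_mul, integral_norm_sq_stdGaussian]
  have hgap := norm_integral_comp_sub_comp_integral_le hf hX (by rwa [hmean])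
  rw [hmean, hvar] at hgap
  exact hgap.trans_eq (by ring)

end Gaussian

/-- The Gaussian smoothing `f_μ` of an `L`-smooth function `f` satisfies
`|f_μ(x) − f(x)| ≤ L d μ² / 2`. -/
theorem gaussian_smoothing_value_bound
    (d : ℕ) (L μ : ℝ) (hμ : 0 < μ)
    (f : EuclideanSpace ℝ (Fin d) → ℝ)
    (hdiff : Differentiable ℝ f)
    (hlip : ∀ x y, ‖gradient f x - gradient f y‖ ≤ L * ‖x - y‖)
    (fμ : EuclideanSpace ℝ (Fin d) → ℝ)
    (hfμ : ∀ x, fμ x = ∫ u, f (x + μ • u) ∂(stdGaussian d))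
    (x : EuclideanSpace ℝ (Fin d)) :
    |fμ x - f x| ≤ L * d * μ ^ 2 / 2 := by
  simpa [hfμ, stdGaussian_eq_stdGaussian_euclideanSpace] using
    gaussian_smoothing_value_bound_general μ hdiff
      fun y => (norm_gradient_sub_gradient f f y x).symm.trans_le (hlip y x)
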